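/- Let f be a cellular automaton on A^ℤ and suppose that the restriction of f to ω̃(f) is equicontinuous (the family of iterates {f^t restricted to ω̃(f) : t ∈ ℕ} is equicontinuous). Then the language L(ω̃(f)) is a Σ⁰₁ (computably enumerable) set of words. -/

import Mathlib

open Filter Set Function

namespace Gls

variable {A : Type*}

/-- The left shift map on `A^ℤ`. -/
def shift (x : ℤ → A) : ℤ → A := fun i => x (i + 1)

/-- A cellular automaton: a continuous shift-commuting self-map of the full shift. -/
def IsCA [TopologicalSpace A] (f : (ℤ → A) → (ℤ → A)) : Prop :=
  Continuous f ∧ f ∘ shift = shift ∘ f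

/-- The set of limit points of the forward orbit of `x` under `f`. -/
def omegaSet [TopologicalSpace A] (f : (ℤ → A) → (ℤ → A)) (x : ℤ → A) : Set (ℤ → A) :=
  {y | MapClusterPt y atTop fun t => f^[t] x}

/-- The realm of attraction of `Y`. -/
def realm [TopologicalSpace A] (f : (ℤ → A) → (ℤ → A)) (Y : Set (ℤ → A)) : Set (ℤ → A) :=
  {x | omegaSet f x ⊆ Y}

/-- The generic limit set: the intersection of all closed sets whose realm is comeager. -/
def genLimitSet [TopologicalSpace A] (f : (ℤ → A) → (ℤ → A)) : Set (ℤ → A) :=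
  ⋂₀ {C | IsClosed C ∧ realm f C ∈ residual (ℤ → A)}

/-- The word `x_{[i, i+n)}` of length `n` read in the configuration `x` from position `i`. -/
def word (x : ℤ → A) (i : ℤ) (n : ℕ) : List A :=
  (List.range n).map fun k => x (i + k)

/-- The cylinder set `[w]_i`. -/
def cylinder (w : List A) (i : ℤ) : Set (ℤ → A) := {x | word x i w.length = w}

/-- The language of `X`: all finite words occurring in points of `X`. -/
def lang (X : Set (ℤ → A)) : Set (List A) :=
  {w | ∃ x ∈ X, ∃ i : ℤ, word x i w.length = w}


/-- The arithmetical hierarchy over `ℕ`: `NatSigma 0` is the class of computable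
predicates, and a predicate is `NatSigma (n+1)` (i.e. `Σ⁰ₙ₊₁`) if it is of the form
`{a | ∃ k, (a, k) ∈ R}` for a `Π⁰ₙ` relation `R` (i.e. a relation whose complement is `Σ⁰ₙ`). -/
def NatSigma : ℕ → (ℕ → Prop) → Prop
  | 0 => fun P => ComputablePred P
  | (n + 1) => fun P =>
      ∃ R : ℕ → Prop, NatSigma n (fun a => ¬ R a) ∧ ∀ a, P a ↔ ∃ k, R (Nat.pair a k)

/-- A set of words is `Σ⁰ₙ` if, identifying words with natural numbers via the canonical
computable encoding, it is a `Σ⁰ₙ` subset of `ℕ`. -/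
def SigmaLang {A : Type*} [Primcodable A] (n : ℕ) (P : Set (List A)) : Prop :=
  NatSigma n (fun m => ∃ w : List A, Encodable.encode w = m ∧ w ∈ P)

/-- A set of words is `Π⁰ₙ` if its complement is `Σ⁰ₙ`. -/
def PiLang {A : Type*} [Primcodable A] (n : ℕ) (P : Set (List A)) : Prop :=
  SigmaLang n {w | w ∉ P}

section Aux

set_option linter.unusedSectionVars false

/-- agreement on an integer interval -/
def Agr (x y : ℤ → A) (l u : ℤ) : Prop := ∀ i, l ≤ i → i ≤ u → x i = y i

/-- `f` has radius `r`. -/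
def Rad (f : (ℤ → A) → (ℤ → A)) (r : ℕ) : Prop :=
  ∀ x y i, Agr x y (i - r) (i + r) → f x i = f y i

lemma cone {f : (ℤ → A) → (ℤ → A)} {r : ℕ} (hr : Rad f r) (t : ℕ) :
    ∀ (x y : ℤ → A) (l u : ℤ), Agr x y (l - t * r) (u + t * r) → Agr (f^[t] x) (f^[t] y) l u := by
  induction t with
  | zero => intro x y l u h; simpa [Agr] using h
  | succ t ih =>
    intro x y l u h i hi1 hi2
    rw [iterate_succ_apply', iterate_succ_apply']
    apply hr
    apply ih
    intro k h1 h2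
    apply h
    · push_cast; nlinarith
    · push_cast; nlinarith

lemma shift_comm {f : (ℤ → A) → (ℤ → A)} (hf : f ∘ shift = shift ∘ f) (k : ℤ) :
    ∀ x : ℤ → A, f (fun i => x (i + k)) = fun i => f x (i + k) := by
  have h1 : ∀ x : ℤ → A, f (fun i => x (i + 1)) = fun i => f x (i + 1) := fun x => congrFun hf x
  induction k using Int.induction_on with
  | zero => intro x; simp
  | succ n ih =>
    intro x
    have := h1 (fun i => x (i + n))
    rw [ih] at this
    funext i
    have h2 := congrFun this i
    rw [show i + ((n : ℤ) + 1) = i + 1 + n by ring]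
    refine Eq.trans ?_ h2
    congr 1
    funext j
    congr 1
    ring
  | pred n ih =>
    intro x
    have := h1 (fun i => x (i + (-(n : ℤ) - 1)))
    have e : (fun i : ℤ => x (i + 1 + (-(n : ℤ) - 1))) = fun i => x (i + -(n : ℤ)) := by
      funext j
      congr 1
      ring
    rw [e, ih] at this
    funext i
    have h2 := congrFun this (i - 1)
    simp only [sub_add_cancel] at h2
    rw [← h2]
    congr 1
    ring

lemma shift_comm_iter {f : (ℤ → A) → (ℤ → A)} (hf : f ∘ shift = shift ∘ f) (k : ℤ) (t : ℕ) :
    ∀ x : ℤ → A, f^[t] (fun i => x (i + k)) = fun i => f^[t] x (i + k) := by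
  induction t with
  | zero => intro x; rfl
  | succ t ih => intro x; rw [iterate_succ_apply', ih, shift_comm hf, ← iterate_succ_apply' f]

lemma word_eq (x : ℤ → A) (i : ℤ) (n : ℕ) :
    word x i n = (List.range n).map fun k : ℕ => x (i + (k : ℤ)) := by
  have h : (List.flatMap (fun a : ℕ => [(a : ℤ)]) (List.range n)) =
      (List.range n).map (fun a : ℕ => (a : ℤ)) := by
    induction List.range n with
    | nil => rfl
    | cons a l ih => simp [List.flatMap_cons, ih]
  change List.map _ (List.flatMap (fun a : ℕ => [(a : ℤ)]) (List.range n)) = _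
  rw [h, List.map_map]
  rfl

lemma per_mod {β : Type*} {z : ℤ → β} {n : ℤ} (h : Periodic z n) (k : ℤ) : z (k % n) = z k := by
  have := h.int_mul (k / n) (k % n)
  rw [← this]
  congr 1
  have := Int.emod_add_mul_ediv k n
  simp only [Int.cast_id]
  linarith

lemma iter_per [TopologicalSpace A] {f : (ℤ → A) → (ℤ → A)} (hf : IsCA f) {x : ℤ → A} {n : ℤ} (h : Periodic x n)
    (t : ℕ) : Periodic (f^[t] x) n := by
  intro i
  have := shift_comm_iter hf.2 n t x
  rw [show (fun i => x (i + n)) = x from funext h] at this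
  exact (congrFun this i).symm

variable [TopologicalSpace A] [DiscreteTopology A]

lemma isOpen_agr (x : ℤ → A) (l u : ℤ) : IsOpen {y : ℤ → A | Agr x y l u} := by
  have : {y : ℤ → A | Agr x y l u} = ⋂ i ∈ Set.Icc l u, {y : ℤ → A | x i = y i} := by
    ext y; simp [Agr]
  rw [this]
  apply (Set.finite_Icc l u).isOpen_biInter
  intro i _
  exact (isOpen_discrete {a | x i = a}).preimage (continuous_apply i)

lemma exists_agr {U : Set (ℤ → A)} (hU : IsOpen U) {x : ℤ → A} (hx : x ∈ U) :
    ∃ n : ℕ, ∀ y, Agr x y (-n) n → y ∈ U := by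
  obtain ⟨I, v, h1, h2⟩ := isOpen_pi_iff.1 hU x hx
  refine ⟨I.sup Int.natAbs, fun y hy => h2 ?_⟩
  intro i hi
  have h3 : i.natAbs ≤ I.sup Int.natAbs := Finset.le_sup (f := Int.natAbs) hi
  rw [← hy i (by omega) (by omega)]
  exact (h1 i hi).2

lemma uniform_agr {β : Type*} {K : Set (ℤ → A)} (hK : IsCompact K) (g : (ℤ → A) → β)
    (h : ∀ x ∈ K, ∃ n : ℕ, ∀ y ∈ K, Agr x y (-n) n → g y = g x) :
    ∃ n : ℕ, ∀ x ∈ K, ∀ y ∈ K, Agr x y (-n) n → g y = g x := by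
  choose! n hn using h
  obtain ⟨s, hs, hs2⟩ := hK.elim_nhds_subcover (fun x => {y | Agr x y (-(n x)) (n x)})
    (fun x _ => (isOpen_agr x _ _).mem_nhds (fun i _ _ => rfl))
  refine ⟨s.sup n, fun x hx y hy hxy => ?_⟩
  obtain ⟨z, hz, hzx⟩ := Set.mem_iUnion₂.1 (hs2 hx)
  have h3 : n z ≤ s.sup n := Finset.le_sup hz
  have hzx' : Agr z x (-(n z)) (n z) := hzx
  rw [hn z (hs z hz) x hx hzx', hn z (hs z hz) y hy]
  intro i h1 h2
  rw [hzx' i h1 h2]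
  exact hxy i (by omega) (by omega)

lemma exists_rad [Finite A] {f : (ℤ → A) → (ℤ → A)} (hf : IsCA f) : ∃ r, Rad f r := by
  obtain ⟨r, hr⟩ := uniform_agr (isCompact_univ : IsCompact (univ : Set (ℤ → A)))
    (fun x => f x 0) (by
      intro x _
      have ho : IsOpen {y | f y 0 = f x 0} :=
        (isOpen_discrete {a | a = f x 0}).preimage ((continuous_apply 0).comp hf.1)
      obtain ⟨n, hn⟩ := exists_agr ho (x := x) rfl
      exact ⟨n, fun y _ h => hn y h⟩)
  refine ⟨r, fun x y i h => ?_⟩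
  have := hr (fun j => x (j + i)) trivial (fun j => y (j + i)) trivial
    (fun j h1 h2 => h _ (by omega) (by omega))
  simp only [shift_comm hf.2] at this
  simpa using this.symm

lemma isClosed_gen (f : (ℤ → A) → (ℤ → A)) : IsClosed (genLimitSet f) :=
  isClosed_sInter fun _ h => h.1

lemma realm_gen [Finite A] (f : (ℤ → A) → (ℤ → A)) :
    realm f (genLimitSet f) ∈ residual (ℤ → A) := by
  obtain ⟨T, hT, hTS, hU⟩ := TopologicalSpace.isOpen_sUnion_countable
    (compl '' {C | IsClosed C ∧ realm f C ∈ residual (ℤ → A)})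
    (by rintro _ ⟨C, hC, rfl⟩; exact hC.1.isOpen_compl)
  have hmem : (⋂ U ∈ T, realm f Uᶜ) ∈ residual (ℤ → A) := by
    refine (countable_bInter_mem hT).2 fun U hUT => ?_
    obtain ⟨C, hC, rfl⟩ := hTS hUT
    rw [compl_compl]; exact hC.2
  refine mem_of_superset hmem ?_
  intro x hx y hy
  by_contra hny
  have : y ∈ ⋃₀ (compl '' {C | IsClosed C ∧ realm f C ∈ residual (ℤ → A)}) := by
    rw [Set.sUnion_image]
    simp only [genLimitSet, Set.mem_sInter, not_forall] at hny
    obtain ⟨C, hC, hyC⟩ := hny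
    exact Set.mem_biUnion hC hyC
  rw [← hU] at this
  obtain ⟨U, hUT, hyU⟩ := this
  exact (Set.mem_iInter₂.1 hx U hUT hy) hyU

/-- translation as a homeomorphism -/
def trans (k : ℤ) : (ℤ → A) ≃ₜ (ℤ → A) where
  toFun x := fun i => x (i + k)
  invFun x := fun i => x (i - k)
  left_inv x := by funext i; simp
  right_inv x := by funext i; simp
  continuous_toFun := by fun_prop
  continuous_invFun := by fun_prop

lemma omega_trans {f : (ℤ → A) → (ℤ → A)} (hf : f ∘ shift = shift ∘ f) (k : ℤ) {x y : ℤ → A}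
    (h : y ∈ omegaSet f x) : trans k y ∈ omegaSet f (trans k x) := by
  have h1 : MapClusterPt y atTop fun t => f^[t] x := h
  have h2 := h1.continuousAt_comp (f := trans k) (trans k).continuous.continuousAt
  have e : (trans k ∘ fun t => f^[t] x) = fun t => f^[t] (trans k x) := by
    funext t
    exact (shift_comm_iter hf k t x).symm
  rw [e] at h2
  exact h2

lemma gen_trans {f : (ℤ → A) → (ℤ → A)} (hf : f ∘ shift = shift ∘ f) (k : ℤ) {x : ℤ → A}
    (hx : x ∈ genLimitSet f) : trans k x ∈ genLimitSet f := by
  rintro C ⟨hC, hr⟩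
  have := hx (trans k ⁻¹' C) ⟨hC.preimage (trans k).continuous, ?_⟩
  · exact this
  · have h2 := tendsto_residual_of_isOpenMap (trans (A := A) k).continuous (trans k).isOpenMap hr
    refine mem_of_superset h2 ?_
    intro z hz y hy
    exact hz (omega_trans hf k hy)

lemma exists_period [Finite A] {f : (ℤ → A) → (ℤ → A)} (hf : IsCA f)
    (h : ∀ x ∈ genLimitSet f, ∃ n : ℕ, ∀ y ∈ genLimitSet f, Agr x y (-n) n →
      (fun t : ℕ => f^[t] y 0) = fun t : ℕ => f^[t] x 0) :
    ∃ t1 t2 : ℕ, t1 < t2 ∧ ∀ x ∈ genLimitSet f, f^[t1] x = f^[t2] x := by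
  obtain ⟨N, hN⟩ := uniform_agr (isClosed_gen f).isCompact (fun x => fun t : ℕ => f^[t] x 0) h
  have : Finite (Set.Icc (-(N : ℤ)) N) := (Set.finite_Icc _ _)
  let Φ : ℕ → (Set.Icc (-(N : ℤ)) N → A) → Set A := fun t p =>
    {a | ∃ x ∈ genLimitSet f, (fun i : Set.Icc (-(N : ℤ)) N => x i) = p ∧ f^[t] x 0 = a}
  obtain ⟨t1, t2, hne, he⟩ := Finite.exists_ne_map_eq_of_infinite Φ
  have key : ∀ x ∈ genLimitSet f, f^[t1] x 0 = f^[t2] x 0 := by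
    intro x hx
    have h1 : f^[t1] x 0 ∈ Φ t1 (fun i => x i) := ⟨x, hx, rfl, rfl⟩
    rw [he] at h1
    obtain ⟨x', hx', hw, h2⟩ := h1
    rw [← h2]
    have := hN x hx x' hx' (fun i h1 h2 => (congrFun hw ⟨i, h1, h2⟩).symm)
    exact congrFun this t2
  have key2 : ∀ x ∈ genLimitSet f, f^[t1] x = f^[t2] x := by
    intro x hx
    funext k
    have := key _ (gen_trans hf.2 k hx)
    change f^[t1] (fun i => x (i + k)) 0 = f^[t2] (fun i => x (i + k)) 0 at this
    rw [shift_comm_iter hf.2, shift_comm_iter hf.2] at this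
    simpa using this
  rcases lt_or_gt_of_ne hne with h' | h'
  · exact ⟨t1, t2, h', key2⟩
  · exact ⟨t2, t1, h', fun x hx => (key2 x hx).symm⟩

/-- `x0` on `[-M,M]` is blocking -/
def Blk (f : (ℤ → A) → (ℤ → A)) (r : ℕ) (x0 : ℤ → A) (M : ℕ) : Prop :=
  ∀ x y, Agr x0 x (-M) M → Agr x0 y (-M) M → ∀ t, Agr (f^[t] x) (f^[t] y) (-r) r

lemma exists_blk [Finite A] [Nonempty A] {f : (ℤ → A) → (ℤ → A)} (hf : IsCA f)
    {r : ℕ} (hr : Rad f r) {t1 t2 : ℕ} (ht : t1 < t2)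
    (hp : ∀ x ∈ genLimitSet f, f^[t1] x = f^[t2] x) :
    ∃ x0 M, Blk f r x0 M := by
  let N : ℕ := r + t2 * r
  let O : Set (ℤ → A) := {x | ∃ z ∈ genLimitSet f, Agr z x (-N) N}
  have hO : IsOpen O := by
    have : O = ⋃ z ∈ genLimitSet f, {x | Agr z x (-N) N} := by ext; simp [O]
    rw [this]
    exact isOpen_biUnion fun z _ => isOpen_agr z _ _
  have hOc : IsClosed O := by
    rw [← isOpen_compl_iff, isOpen_iff_mem_nhds]
    intro x hx
    refine mem_of_superset ((isOpen_agr x (-N) N).mem_nhds (fun i _ _ => rfl)) ?_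
    rintro y hy ⟨z, hz, hzy⟩
    exact hx ⟨z, hz, fun i h1 h2 => (hzy i h1 h2).trans (hy i h1 h2).symm⟩
  let C : ℕ → Set (ℤ → A) := fun T => ⋂ t ≥ T, (f^[t]) ⁻¹' O
  have hC : ∀ T, IsClosed (C T) := fun T =>
    isClosed_biInter fun t _ => hOc.preimage (hf.1.iterate t)
  have hcov : realm f (genLimitSet f) ⊆ ⋃ T, C T := by
    intro x hx
    by_contra hcon
    have hfr : ∃ᶠ t in atTop, f^[t] x ∈ Oᶜ := by
      rw [frequently_atTop]
      intro T
      by_contra h2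
      push Not at h2
      apply hcon
      refine Set.mem_iUnion.2 ⟨T, Set.mem_iInter₂.2 fun t ht => ?_⟩
      by_contra h3
      exact (h2 t ht) h3
    obtain ⟨y, hy, hcl⟩ := hO.isClosed_compl.isCompact.exists_mapClusterPt_of_frequently hfr
    exact hy ⟨y, hx hcl, fun i _ _ => rfl⟩
  obtain ⟨G, hG, hGδ, hGd⟩ := mem_residual.1 (realm_gen f)
  have hd := hGδ.dense_iUnion_interior_of_closed hGd hC (hG.trans hcov)
  obtain ⟨x0, hx0⟩ := hd.nonempty
  obtain ⟨T, hT⟩ := Set.mem_iUnion.1 hx0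
  obtain ⟨m, hm⟩ := exists_agr isOpen_interior hT
  refine ⟨x0, m + r + (T + t2) * r, ?_⟩
  have sub : ∀ x, Agr x0 x (-(m + r + (T + t2) * r : ℕ)) (m + r + (T + t2) * r : ℕ) →
      ∀ t ≥ T, Agr (f^[t + t1] x) (f^[t + t2] x) (-r) r := by
    intro x hx t htT
    have hxC : x ∈ C T := interior_subset (hm x (fun i h1 h2 => hx i
      (by push_cast; nlinarith [Nat.zero_le ((T + t2) * r), Nat.zero_le r])
      (by push_cast; nlinarith [Nat.zero_le ((T + t2) * r), Nat.zero_le r])))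
    obtain ⟨z, hz, hzx⟩ := Set.mem_iInter₂.1 hxC t htT
    have e := hp z hz
    have a1 : Agr (f^[t1] z) (f^[t1] (f^[t] x)) (-r) r := by
      apply cone hr
      intro i h1 h2
      have : t1 * r ≤ t2 * r := Nat.mul_le_mul_right r ht.le
      have h3 : (t1 : ℤ) * r ≤ t2 * r := by exact_mod_cast this
      refine hzx i ?_ ?_ <;> simp only [N] <;> push_cast <;> linarith
    have a2 : Agr (f^[t2] z) (f^[t2] (f^[t] x)) (-r) r := by
      apply cone hr
      intro i h1 h2
      refine hzx i ?_ ?_ <;> simp only [N] <;> push_cast <;> linarith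
    intro i h1 h2
    rw [add_comm t t1, add_comm t t2, iterate_add_apply, iterate_add_apply,
      ← a1 i h1 h2, ← a2 i h1 h2, e]
  intro x y hx hy t
  induction t using Nat.strong_induction_on with
  | _ t ih =>
    by_cases hlt : t < T + t2
    · apply cone hr
      have h3 : (t : ℤ) * r ≤ (T + t2) * r := by
        exact_mod_cast Nat.mul_le_mul_right r hlt.le
      intro i h1 h2
      rw [← hx i, ← hy i] <;> push_cast <;> linarith
    · obtain ⟨s, rfl⟩ : ∃ s, t = (T + s) + t2 := ⟨t - T - t2, by omega⟩
      intro i h1 h2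
      rw [← sub x hx (T + s) (by omega) i h1 h2, ← sub y hy (T + s) (by omega) i h1 h2]
      exact ih _ (by omega) i h1 h2

lemma blk_shift {f : (ℤ → A) → (ℤ → A)} (hf : IsCA f) {r : ℕ} {x0 : ℤ → A} {M : ℕ}
    (hb : Blk f r x0 M) (x y : ℤ → A) (q : ℤ)
    (hx : Agr x0 (fun i => x (i + q)) (-M) M) (hy : Agr x0 (fun i => y (i + q)) (-M) M) (t : ℕ) :
    Agr (f^[t] x) (f^[t] y) (q - r) (q + r) := by
  intro i h1 h2
  have := hb _ _ hx hy t (i - q) (by omega) (by omega)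
  rw [shift_comm_iter hf.2, shift_comm_iter hf.2] at this
  simpa using this

lemma between {f : (ℤ → A) → (ℤ → A)} (hf : IsCA f) {r : ℕ} (hr : Rad f r)
    {x0 : ℤ → A} {M : ℕ} (hb : Blk f r x0 M) (x y : ℤ → A) (a b : ℤ)
    (hxa : Agr x0 (fun i => x (i + a)) (-M) M) (hya : Agr x0 (fun i => y (i + a)) (-M) M)
    (hxb : Agr x0 (fun i => x (i + b)) (-M) M) (hyb : Agr x0 (fun i => y (i + b)) (-M) M)
    (hxy : Agr x y a b) (t : ℕ) : Agr (f^[t] x) (f^[t] y) a b := by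
  induction t with
  | zero => exact hxy
  | succ t ih =>
    intro i h1 h2
    by_cases c1 : i ≤ a + r
    · exact blk_shift hf hb x y a hxa hya (t + 1) i (by omega) c1
    by_cases c2 : b - r ≤ i
    · exact blk_shift hf hb x y b hxb hyb (t + 1) i c2 (by omega)
    rw [iterate_succ_apply', iterate_succ_apply']
    apply hr
    intro k h3 h4
    exact ih k (by omega) (by omega)

lemma word_congr {x y : ℤ → A} {i : ℤ} {n : ℕ} (h : Agr x y i (i + n)) :
    word x i n = word y i n := by
  rw [word_eq, word_eq]
  apply List.map_congr_left
  intro k hk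
  have := List.mem_range.1 hk
  exact h _ (by omega) (by omega)

lemma isClosed_word (i : ℤ) (s : List A) : IsClosed {x : ℤ → A | word x i s.length = s} := by
  rw [← isOpen_compl_iff, isOpen_iff_mem_nhds]
  intro x hx
  refine mem_of_superset ((isOpen_agr x i (i + s.length)).mem_nhds (fun i _ _ => rfl)) ?_
  intro y hy h
  exact hx ((word_congr hy).trans h)

lemma isOpen_word (i : ℤ) (s : List A) : IsOpen {x : ℤ → A | word x i s.length = s} := by
  rw [isOpen_iff_mem_nhds]
  intro x hx
  refine mem_of_superset ((isOpen_agr x i (i + s.length)).mem_nhds (fun i _ _ => rfl)) ?_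
  intro y hy
  exact (word_congr hy).symm.trans hx

lemma occ_residual (x0 : ℤ → A) (M : ℕ) (S : Set ℤ) (hS : ∀ m : ℕ, ∃ a ∈ S, m < a.natAbs) :
    {x : ℤ → A | ∃ a ∈ S, Agr x0 (fun i => x (i + a)) (-M) M} ∈ residual (ℤ → A) := by
  apply residual_of_dense_open
  · have : {x : ℤ → A | ∃ a ∈ S, Agr x0 (fun i => x (i + a)) (-M) M} =
      ⋃ a ∈ S, (trans a) ⁻¹' {y | Agr x0 y (-M) M} := by
      ext x; simp [trans]
    rw [this]
    exact isOpen_biUnion fun a _ => (isOpen_agr x0 _ _).preimage (trans a).continuous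
  · rw [dense_iff_inter_open]
    rintro U hU ⟨x, hx⟩
    obtain ⟨n, hn⟩ := exists_agr hU hx
    obtain ⟨a, ha, hna⟩ := hS (n + M)
    refine ⟨fun i => if i.natAbs ≤ n then x i else x0 (i - a), hn _ ?_, a, ha, ?_⟩
    · intro i h1 h2
      simp only
      rw [if_pos (by omega)]
    · intro i h1 h2
      simp only
      rw [if_neg (by omega)]
      simp

lemma charac [Finite A] [Nonempty A] {f : (ℤ → A) → (ℤ → A)} (hf : IsCA f) {r : ℕ} (hr : Rad f r)
    {x0 : ℤ → A} {M : ℕ} (hb : Blk f r x0 M) (s : List A) :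
    s ∈ lang (genLimitSet f) ↔ ∃ n : ℕ, 0 < n ∧ ∃ x : ℤ → A, Periodic x (n : ℤ) ∧ ∃ q j : ℤ,
      Agr x0 (fun i => x (i + q)) (-M) M ∧ ∃ t1 t2, t1 < t2 ∧ f^[t1] x = f^[t2] x ∧
      word (f^[t1] x) j s.length = s := by
  constructor
  · rintro ⟨z, hz, i, hzi⟩
    let G : Set (ℤ → A) := {x : ℤ → A | word x i s.length = s}
    let E : Set (ℤ → A) := {x | ∃ᶠ t in atTop, f^[t] x ∈ G}
    let B : Set (ℤ → A) := ⋂ N : ℕ,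
      ({x : ℤ → A | ∃ a ∈ Set.Iic (-(N : ℤ)), Agr x0 (fun i => x (i + a)) (-M) M} ∩
       {x : ℤ → A | ∃ a ∈ Set.Ici (N : ℤ), Agr x0 (fun i => x (i + a)) (-M) M})
    have hB : B ∈ residual (ℤ → A) := by
      refine countable_iInter_mem.2 fun N => inter_mem ?_ ?_
      · apply occ_residual
        intro m
        exact ⟨-(N : ℤ) - m - 1, by simp; omega, by omega⟩
      · apply occ_residual
        intro m
        exact ⟨(N : ℤ) + m + 1, by simp; omega, by omega⟩
    have hex : ∃ x ∈ B, x ∈ E := by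
      by_contra hcon
      push Not at hcon
      refine hz Gᶜ ⟨(isOpen_word i s).isClosed_compl, mem_of_superset hB ?_⟩ hzi
      intro x hx y hy hyG
      apply hcon x hx
      exact (hy : MapClusterPt y atTop _).frequently ((isOpen_word i s).mem_nhds hyG)
    obtain ⟨x, hxB, hxE⟩ := hex
    obtain ⟨⟨a, ha, hxa⟩, ⟨b, hbb, hxb⟩⟩ := Set.mem_iInter.1 hxB (i.natAbs + s.length)
    simp only [Set.mem_Iic, Set.mem_Ici] at ha hbb
    obtain ⟨n, hn⟩ : ∃ n : ℕ, (n : ℤ) = b + M - (a - M) + 1 :=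
      ⟨(b + M - (a - M) + 1).toNat, by omega⟩
    have hn0 : 0 < n := by omega
    let x' : ℤ → A := fun k => x (a - M + (k - (a - M)) % n)
    have hper : Periodic x' (n : ℤ) := by
      intro k
      simp only [x']
      congr 2
      rw [show k + n - (a - M) = k - (a - M) + n by ring, Int.add_emod_right]
    have hag : Agr x x' (a - M) (b + M) := by
      intro k h1 h2
      simp only [x']
      rw [Int.emod_eq_of_lt (by omega) (by omega)]
      congr 1
      ring
    have hx'a : Agr x0 (fun i => x' (i + a)) (-M) M := by
      intro k h1 h2
      simp only
      rw [← hag _ (by omega) (by omega)]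
      exact hxa k h1 h2
    have hx'b : Agr x0 (fun i => x' (i + b)) (-M) M := by
      intro k h1 h2
      simp only
      rw [← hag _ (by omega) (by omega)]
      exact hxb k h1 h2
    have hbt := between hf hr hb x x' a b hxa hx'a hxb hx'b
      (fun k h1 h2 => hag k (by omega) (by omega))
    have hfr : ∃ᶠ t in atTop, f^[t] x' ∈ G := by
      refine hxE.mono fun t ht => ?_
      have : word (f^[t] x) i s.length = s := ht
      change word (f^[t] x') i s.length = s
      rw [← word_congr (x := f^[t] x)]
      · exact this
      · exact fun k h1 h2 => hbt t k (by omega) (by omega)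
    have hinf := Nat.frequently_atTop_iff_infinite.1 hfr
    obtain ⟨t1, h1, t2, h2, hne, he⟩ := hinf.exists_lt_map_eq_of_mapsTo
      (f := fun t => fun i : Fin n => f^[t] x' (i : ℕ)) (t := Set.univ)
      (fun _ _ => trivial) Set.finite_univ
    refine ⟨n, hn0, x', hper, a, i, hx'a, t1, t2, hne, ?_, h1⟩
    funext k
    rw [← per_mod (iter_per hf hper t1) k, ← per_mod (iter_per hf hper t2) k]
    have p1 := Int.emod_nonneg k (show (n : ℤ) ≠ 0 by omega)
    have p2 := Int.emod_lt_of_pos k (show (0 : ℤ) < n by omega)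
    have := congrFun he ⟨(k % n).toNat, by omega⟩
    simp only at this
    rwa [Int.toNat_of_nonneg p1] at this
  · rintro ⟨n, hn, x, hper, q, j, hq, t1, t2, hlt, heq, hw⟩
    let K : ℤ := (j - q).natAbs + s.length
    have hocc : ∀ k : ℤ, Agr x0 (fun i => x (i + (q + k * n))) (-M) M := by
      intro k i h1 h2
      have := hper.int_mul k (i + q)
      simp only [Int.cast_id] at this
      simp only
      rw [← add_assoc, this]
      exact hq i h1 h2
    have hKn : K ≤ K * n := by
      have : 0 ≤ K := by simp only [K]; omega
      nlinarith
    have hd : Dense (realm f (genLimitSet f)) := dense_of_mem_residual (realm_gen f)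
    obtain ⟨x', hx'U, hx'r⟩ := hd.inter_open_nonempty _
      (isOpen_agr x (q - K * n - M) (q + K * n + M)) ⟨x, fun i _ _ => rfl⟩
    have hx'U : Agr x x' (q - K * n - M) (q + K * n + M) := hx'U
    have hK0 : 0 ≤ K := by simp only [K]; omega
    have ha' : Agr x0 (fun i => x' (i + (q + (-K) * n))) (-M) M := by
      intro i h1 h2
      simp only
      rw [← hx'U _ (by linarith) (by linarith)]
      exact hocc (-K) i h1 h2
    have hb' : Agr x0 (fun i => x' (i + (q + K * n))) (-M) M := by
      intro i h1 h2
      simp only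
      rw [← hx'U _ (by linarith) (by linarith)]
      exact hocc K i h1 h2
    have hbt := between hf hr hb x x' _ _ (hocc (-K)) ha' (hocc K) hb'
      (fun i h1 h2 => hx'U i (by linarith) (by linarith))
    have hit : ∀ k : ℕ, f^[t1 + k * (t2 - t1)] x = f^[t1] x := by
      intro k
      induction k with
      | zero => simp
      | succ k ih =>
        rw [show t1 + (k + 1) * (t2 - t1) = (t2 - t1) + (t1 + k * (t2 - t1)) by ring,
          iterate_add_apply, ih, ← iterate_add_apply, Nat.sub_add_cancel hlt.le, heq]
    have hfr : ∃ᶠ t in atTop, f^[t] x' ∈ {x : ℤ → A | word x j s.length = s} := by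
      rw [frequently_atTop]
      intro T
      refine ⟨t1 + T * (t2 - t1), ?_, ?_⟩
      · have : 1 ≤ t2 - t1 := by omega
        nlinarith
      · change word (f^[_] x') j s.length = s
        rw [← word_congr (x := f^[t1 + T * (t2 - t1)] x), hit, hw]
        intro i h1 h2
        have hKd : K = (j - q).natAbs + s.length := rfl
        exact hbt _ i (by rw [neg_mul]; omega) (by omega)
    obtain ⟨y, hy, hcl⟩ :=
      (isClosed_word j s).isCompact.exists_mapClusterPt_of_frequently hfr
    exact ⟨y, hx'r hcl, j, hy⟩

end Aux

section Comp

set_option linter.unusedSectionVars false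

variable [Inhabited A]

/-- cyclic reading -/
def cyc (y : List A) (i : ℕ) : A := y.getD (i % y.length) default

/-- bi-infinite periodic configuration -/
def per (y : List A) : ℤ → A := fun i => y.getD (i % (y.length : ℤ)).toNat default

/-- reading a cyclic word -/
def rd (y : List A) (q n : ℕ) : List A := (List.range n).map fun k => cyc y (q + k)

/-- the local rule -/
def rule (f : (ℤ → A) → (ℤ → A)) (r : ℕ) (v : List.Vector A (2 * r + 1)) : A :=
  f (fun i => v.toList.getD (i + r).toNat default) 0

/-- the action on cyclic words -/
def cycF {r : ℕ} (φ : List.Vector A (2 * r + 1) → A) (y : List A) : List A :=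
  (List.range y.length).map fun i =>
    φ (List.Vector.ofFn fun k : Fin (2 * r + 1) => cyc y (i + k + (y.length - 1) * r))

lemma per_nat (y : List A) (i : ℕ) : per y (i : ℤ) = cyc y i := by
  unfold per cyc
  congr 1

lemma per_periodic (y : List A) : Periodic (per y) (y.length : ℤ) := by
  intro i
  simp [per]

lemma word_per (y : List A) (q n : ℕ) : word (per y) q n = rd y q n := by
  rw [word_eq, rd]
  apply List.map_congr_left
  intro k _
  rw [← per_nat]
  push_cast
  rfl

lemma word_mod {x : ℤ → A} {n : ℤ} (h : Periodic x n) (j : ℤ) (m : ℕ) :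
    word x (j % n) m = word x j m := by
  rw [word_eq, word_eq]
  apply List.map_congr_left
  intro k _
  rw [← per_mod h (j + k), ← per_mod h (j % n + k), Int.emod_add_emod]

lemma per_of_periodic {x : ℤ → A} {n : ℕ} (hn : 0 < n) (h : Periodic x (n : ℤ)) :
    per ((List.range n).map fun k : ℕ => x k) = x := by
  funext i
  rw [← per_mod h i]
  have p1 := Int.emod_nonneg i (show (n : ℤ) ≠ 0 by omega)
  have p2 := Int.emod_lt_of_pos i (show (0 : ℤ) < n by omega)
  have p3 : (i % (n : ℤ)).toNat < n := by omega
  simp only [per, List.length_map, List.length_range]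
  rw [List.getD_eq_getElem _ _ (by simpa using p3)]
  simp [Int.toNat_of_nonneg p1]

lemma per_inj {y z : List A} (hl : y.length = z.length) (h : per y = per z) : y = z := by
  apply List.ext_getElem hl
  intro i h1 h2
  have := congrFun h (i : ℤ)
  rw [per_nat, per_nat, cyc, cyc, Nat.mod_eq_of_lt h1, Nat.mod_eq_of_lt h2,
    List.getD_eq_getElem _ _ h1, List.getD_eq_getElem _ _ h2] at this
  exact this

lemma cycF_length {r : ℕ} (φ : List.Vector A (2 * r + 1) → A) (y : List A) :
    (cycF φ y).length = y.length := by simp [cycF]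

lemma cycF_iter_length {r : ℕ} (φ : List.Vector A (2 * r + 1) → A) (y : List A) (t : ℕ) :
    ((cycF φ)^[t] y).length = y.length := by
  induction t with
  | zero => rfl
  | succ t ih => rw [iterate_succ_apply', cycF_length, ih]

lemma f_per [TopologicalSpace A] {f : (ℤ → A) → (ℤ → A)} (hf : IsCA f) {r : ℕ} (hr : Rad f r)
    {y : List A} (hy : 0 < y.length) : f (per y) = per (cycF (rule f r) y) := by
  funext i
  have P1 : Periodic (f (per y)) (y.length : ℤ) := iter_per hf (per_periodic y) 1
  have P2 := per_periodic (cycF (rule f r) y)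
  rw [cycF_length] at P2
  rw [← per_mod P1 i, ← per_mod P2 i]
  have p1 := Int.emod_nonneg i (show (y.length : ℤ) ≠ 0 by omega)
  have p2 := Int.emod_lt_of_pos i (show (0 : ℤ) < y.length by omega)
  obtain ⟨m, hm⟩ := Int.eq_ofNat_of_zero_le p1
  rw [hm] at p2 ⊢
  have p3 : m < y.length := by exact_mod_cast p2
  rw [per_nat, cyc, cycF_length, Nat.mod_eq_of_lt p3,
    List.getD_eq_getElem _ _ (by rw [cycF_length]; exact p3)]
  simp only [cycF, List.getElem_map, List.getElem_range, rule]
  have e := congrFun (shift_comm hf.2 (m : ℤ) (per y)) 0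
  simp only [zero_add] at e
  rw [← e]
  apply hr
  intro j h1 h2
  simp only
  have h3 : (j + r).toNat < 2 * r + 1 := by omega
  rw [List.getD_eq_getElem _ _ (by simpa using h3)]
  simp only [List.Vector.toList_ofFn, List.getElem_ofFn]
  rw [← per_nat]
  have := (per_periodic y).int_mul (r : ℤ) (j + m)
  rw [← this]
  congr 1
  obtain ⟨n, hn⟩ : ∃ n, y.length = n + 1 := ⟨y.length - 1, by omega⟩
  rw [hn]
  push_cast
  rw [Int.toNat_of_nonneg (by omega)]
  ring

lemma f_iter_per [TopologicalSpace A] {f : (ℤ → A) → (ℤ → A)} (hf : IsCA f) {r : ℕ}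
    (hr : Rad f r) {y : List A} (hy : 0 < y.length) (t : ℕ) :
    f^[t] (per y) = per ((cycF (rule f r))^[t] y) := by
  induction t with
  | zero => rfl
  | succ t ih =>
    rw [iterate_succ_apply', iterate_succ_apply', ih, f_per hf hr]
    rwa [cycF_iter_length]

/-- the decidable matrix -/
def Mat {r : ℕ} (φ : List.Vector A (2 * r + 1) → A) (V : List A)
    (p : List A × (List A × ℕ × ℕ × ℕ × ℕ)) : Prop :=
  0 < p.2.1.length ∧ rd p.2.1 p.2.2.1 V.length = V ∧ p.2.2.2.2.1 < p.2.2.2.2.2 ∧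
  (cycF φ)^[p.2.2.2.2.1] p.2.1 = (cycF φ)^[p.2.2.2.2.2] p.2.1 ∧
  rd ((cycF φ)^[p.2.2.2.2.1] p.2.1) p.2.2.2.1 p.1.length = p.1

lemma agr_word (x0 x : ℤ → A) (M : ℕ) (q : ℤ) :
    Agr x0 (fun i => x (i + q)) (-M) M ↔
      word x (q - M) (2 * M + 1) = word x0 (-M) (2 * M + 1) := by
  rw [word_eq, word_eq, List.map_inj_left]
  constructor
  · intro h k hk
    have := List.mem_range.1 hk
    rw [h _ (by omega) (by omega)]
    congr 1
    ring
  · intro h i h1 h2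
    have := h (i + M).toNat (List.mem_range.2 (by omega))
    rw [Int.toNat_of_nonneg (by omega)] at this
    simp only
    rw [show i + q = q - M + (i + M) by ring, this]
    congr 1
    ring

lemma charac2 [Finite A] [TopologicalSpace A] [DiscreteTopology A]
    {f : (ℤ → A) → (ℤ → A)} (hf : IsCA f) {r : ℕ} (hr : Rad f r)
    {x0 : ℤ → A} {M : ℕ} (hb : Blk f r x0 M) (s : List A) :
    s ∈ lang (genLimitSet f) ↔ ∃ k, Mat (rule f r) (word x0 (-M) (2 * M + 1)) (s, k) := by
  rw [charac hf hr hb]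
  have hV : (word x0 (-M) (2 * M + 1)).length = 2 * M + 1 := by simp [word_eq]
  constructor
  · rintro ⟨n, hn, x, hper, q, j, hq, t1, t2, hlt, heq, hw⟩
    have hx := per_of_periodic hn hper
    set y := (List.range n).map fun k : ℕ => x k with hy
    have hyl : y.length = n := by simp [hy]
    have hn0 : (n : ℤ) ≠ 0 := by omega
    refine ⟨(y, ((q - M) % n).toNat, (j % n).toNat, t1, t2), by simp only; omega, ?_, hlt, ?_, ?_⟩
    · simp only
      rw [hV, ← word_per, hx, Int.toNat_of_nonneg (Int.emod_nonneg _ hn0), word_mod hper]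
      exact (agr_word _ _ _ _).1 hq
    · simp only
      apply per_inj
      · rw [cycF_iter_length, cycF_iter_length]
      · rw [← f_iter_per hf hr (by omega), ← f_iter_per hf hr (by omega), hx, heq]
    · simp only
      rw [← word_per, ← f_iter_per hf hr (by omega), hx,
        Int.toNat_of_nonneg (Int.emod_nonneg _ hn0), word_mod (iter_per hf hper t1), hw]
  · rintro ⟨⟨y, q, j, t1, t2⟩, h1, h2, h3, h4, h5⟩
    simp only at h1 h2 h3 h4 h5
    refine ⟨y.length, h1, per y, per_periodic y, q + M, j, ?_, t1, t2, h3, ?_, ?_⟩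
    · rw [agr_word, add_sub_cancel_right, word_per]
      rwa [hV] at h2
    · rw [f_iter_per hf hr h1, f_iter_per hf hr h1, h4]
    · rw [f_iter_per hf hr h1, word_per, h5]

end Comp

section Prim

variable [Inhabited A] [Primcodable A]

lemma primrec_cyc : Primrec₂ (cyc : List A → ℕ → A) :=
  (Primrec.list_getD default).comp Primrec.fst
    (Primrec.nat_mod.comp Primrec.snd (Primrec.list_length.comp Primrec.fst))

lemma primrec_rd {γ : Type*} [Primcodable γ] {y : γ → List A} {q n : γ → ℕ} (hy : Primrec y)
    (hq : Primrec q) (hn : Primrec n) : Primrec fun c => rd (y c) (q c) (n c) := by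
  unfold rd
  refine Primrec.list_map (Primrec.list_range.comp hn) ?_
  exact primrec_cyc.comp (hy.comp Primrec.fst)
    (Primrec.nat_add.comp (hq.comp Primrec.fst) Primrec.snd)

lemma primrec_cycF [Finite A] {r : ℕ} (φ : List.Vector A (2 * r + 1) → A) :
    Primrec (cycF φ) := by
  unfold cycF
  refine Primrec.list_map (Primrec.list_range.comp Primrec.list_length) ?_
  have : Finite (List.Vector A (2 * r + 1)) := by
    have := Fintype.ofFinite A
    infer_instance
  refine (Primrec.dom_finite φ).comp (Primrec.vector_ofFn fun k => ?_)
  refine primrec_cyc.comp Primrec.fst ?_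
  refine Primrec.nat_add.comp (Primrec.nat_add.comp Primrec.snd (Primrec.const _)) ?_
  refine Primrec.nat_mul.comp ?_ (Primrec.const _)
  exact Primrec.nat_sub.comp (Primrec.list_length.comp Primrec.fst) (Primrec.const _)

lemma primrec_iter [Finite A] {γ : Type*} [Primcodable γ] {r : ℕ}
    (φ : List.Vector A (2 * r + 1) → A) {y : γ → List A} {t : γ → ℕ} (hy : Primrec y)
    (ht : Primrec t) : Primrec fun c => (cycF φ)^[t c] (y c) :=
  Primrec.nat_iterate ht hy ((primrec_cycF φ).comp Primrec.snd)

lemma primrec_mat [Finite A] {r : ℕ} (φ : List.Vector A (2 * r + 1) → A) (V : List A) :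
    PrimrecPred (Mat φ V) := by
  have hs : Primrec fun p : List A × (List A × ℕ × ℕ × ℕ × ℕ) => p.1 := Primrec.fst
  have h2 : Primrec fun p : List A × (List A × ℕ × ℕ × ℕ × ℕ) => p.2 := Primrec.snd
  have hy := Primrec.fst.comp h2
  have h3 := Primrec.snd.comp h2
  have hq := Primrec.fst.comp h3
  have h4 := Primrec.snd.comp h3
  have hj := Primrec.fst.comp h4
  have h5 := Primrec.snd.comp h4
  have ht1 := Primrec.fst.comp h5
  have ht2 := Primrec.snd.comp h5
  have hi1 := primrec_iter φ hy ht1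
  have hi2 := primrec_iter φ hy ht2
  unfold Mat
  refine PrimrecPred.and ?_ (PrimrecPred.and ?_ (PrimrecPred.and ?_ (PrimrecPred.and ?_ ?_)))
  · exact Primrec.nat_lt.comp (Primrec.const 0) (Primrec.list_length.comp hy)
  · exact Primrec.eq.comp (primrec_rd hy hq (Primrec.const _)) (Primrec.const V)
  · exact Primrec.nat_lt.comp ht1 ht2
  · exact Primrec.eq.comp hi1 hi2
  · exact Primrec.eq.comp (primrec_rd hi1 hj (Primrec.list_length.comp hs)) hs

end Prim

lemma sigma_of {A : Type*} [Primcodable A] {K : Type*} [Primcodable K] {Q : List A × K → Prop}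
    (hQ : PrimrecPred Q) (P : Set (List A)) (hP : ∀ s, s ∈ P ↔ ∃ k, Q (s, k)) :
    SigmaLang 1 P := by
  refine ⟨fun m => ∃ p : List A × K, Encodable.encode p = m ∧ Q p, ?_, ?_⟩
  · change ComputablePred _
    refine ComputablePred.not ?_
    obtain ⟨hd, hQ'⟩ := hQ
    refine ComputablePred.computable_iff.2 ⟨fun m =>
      Option.casesOn (Encodable.decode (α := List A × K) m) false
        (fun p => decide (Encodable.encode p = m) && decide (Q p)), ?_, ?_⟩
    · refine Primrec.to_comp ?_
      refine Primrec.option_casesOn Primrec.decode (Primrec.const false) ?_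
      refine Primrec.and.comp ?_ (hQ'.comp Primrec.snd)
      exact PrimrecPred.decide (Primrec.eq.comp (Primrec.encode.comp Primrec.snd) Primrec.fst)
    · funext m
      apply propext
      constructor
      · rintro ⟨p, rfl, hp⟩
        simp [hp]
      · beta_reduce
        generalize Encodable.decode (α := List A × K) m = o
        cases o with
        | none => intro h; exact absurd h Bool.false_ne_true
        | some p =>
          intro h
          have h' : (decide (Encodable.encode p = m) && decide (Q p)) = true := h
          rw [Bool.and_eq_true, decide_eq_true_iff, decide_eq_true_iff] at h'
          exact ⟨p, h'.1, h'.2⟩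
  · intro a
    constructor
    · rintro ⟨w, rfl, hw⟩
      obtain ⟨k, hk⟩ := (hP w).1 hw
      exact ⟨Encodable.encode k, (w, k), rfl, hk⟩
    · rintro ⟨k, ⟨w, k'⟩, he, hQ⟩
      have : Nat.pair (Encodable.encode w) (Encodable.encode k') = Nat.pair a k := he
      exact ⟨w, (Nat.pair_eq_pair.1 this).1, (hP w).2 ⟨k', hQ⟩⟩

/-- if the family of iterates of `f` restricted to `ω̃(f)` is equicontinuous,
then the language of `ω̃(f)` is `Σ⁰₁` (computably enumerable). -/
theorem stmt7 [Fintype A] [Primcodable A] [UniformSpace A] [DiscreteTopology A]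
    (f : (ℤ → A) → (ℤ → A)) (hf : IsCA f)
    (hequi : Equicontinuous fun (t : ℕ) (x : genLimitSet f) => f^[t] x.val) :
    SigmaLang 1 (lang (genLimitSet f)) := by
  rcases isEmpty_or_nonempty A with hA | hA
  · refine sigma_of (K := ℕ) (Q := fun _ => False) ?_ _ ?_
    · exact ⟨inferInstance, by simpa using Primrec.const false⟩
    · intro s
      simp only [exists_false, iff_false]
      rintro ⟨x, _⟩
      exact hA.false (x 0)
  · have : Inhabited A := Classical.inhabited_of_nonempty hA
    obtain ⟨r, hr⟩ := exists_rad hf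
    obtain ⟨t1, t2, ht, hp⟩ := exists_period hf (by
      intro x hx
      have hdiag : {p : A × A | p.1 = p.2} ∈ uniformity A := by
        rw [compactSpace_uniformity, mem_iSup]
        intro a
        rw [nhds_discrete]
        exact rfl
      have hent : {p : (ℤ → A) × (ℤ → A) | p.1 0 = p.2 0} ∈ uniformity (ℤ → A) := by
        have := Pi.uniformContinuous_proj (fun _ : ℤ => A) 0
        exact this hdiag
      have h1 := hequi ⟨x, hx⟩ _ hent
      rw [nhds_subtype, Filter.eventually_comap] at h1
      obtain ⟨U, hU, hUo, hxU⟩ := eventually_nhds_iff.1 h1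
      obtain ⟨n, hn⟩ := exists_agr hUo hxU
      refine ⟨n, fun y hy hxy => ?_⟩
      funext t
      exact (hU y (hn y hxy) ⟨y, hy⟩ rfl t).symm)
    obtain ⟨x0, M, hb⟩ := exists_blk hf hr ht hp
    exact sigma_of (primrec_mat (rule f r) _) _ (charac2 hf hr hb)

end Gls
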